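/- Let H be a real Hilbert space, C ⊆ H nonempty closed convex, and suppose {f_i}_{i=1}^N, {A_i}_{i=1}^N, {S_j}_{j=1}^M, F, ω, and the parameter sequences {α_n}, {β_n}, {r_n} satisfy the stated hypotheses. Let x_0 ∈ C, C_0 = C, and suppose the sequences {x_n}, {y_n^i}, {z_n^j}, {C_n} satisfy for every n ≥ 0: (i) for each i, y_n^i ∈ C and f_i(y_n^i, y) + ⟨A_i x_n, y − y_n^i⟩ + (1/r_n)⟨y − y_n^i, y_n^i − x_n⟩ ≥ 0 for all y ∈ C; (ii) i_n maximizes ‖y_n^i − x_n‖ over i = 1,…,N and ȳ_n = y_n^{i_n}; (iii) z_n^j = α_n x_n + (1−α_n)(β_n ȳ_n + (1−β_n) S_j^n ȳ_n) for j = 1,…,M; (iv) j_n maximizes ‖z_n^j − x_n‖ over j = 1,…,M and z̄_n = z_n^{j_n}; (v) C_{n+1} = {v ∈ C_n : ‖z̄_n − v‖² ≤ ‖x_n − v‖² + ε_n} with ε_n = (k_n − 1)(‖x_n‖ + ω)²; (vi) x_{n+1} = P_{C_{n+1}} x_0. Then the sequences {x_n}, {y_n^i} (each i), and {z_n^j}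 (each j) all converge strongly to P_F x_0. -/

import Mathlib

open scoped RealInnerProductSpace
open Filter Topology

/-- `p` is the metric projection of `x` onto `K`. -/
def IsProjOn {H : Type*} [NormedAddCommGroup H] (K : Set H) (x p : H) : Prop :=
  p ∈ K ∧ ∀ v ∈ K, ‖p - x‖ ≤ ‖v - x‖

/-- resolvent estimate -/
lemma aux_resolvent {H : Type*} [NormedAddCommGroup H] [InnerProductSpace ℝ H]
    (x y u Ax Au : H) (α r e p q : ℝ) (hα : 0 < α) (hr : 0 < r) (hre : r ≤ e)
    (h1 : 0 ≤ p + ⟪Ax, u - y⟫ + (1 / r) * ⟪u - y, y - x⟫)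
    (h2 : 0 ≤ q + ⟪Au, y - u⟫) (h3 : p + q ≤ 0)
    (h4 : α * ‖Ax - Au‖ ^ 2 ≤ ⟪Ax - Au, x - u⟫) :
    ‖y - u‖ ^ 2 ≤ ‖x - u‖ ^ 2 - (1 - e / (2 * α)) * ‖x - y‖ ^ 2 := by
  have e1 : ⟪Ax, u - y⟫ + ⟪Au, y - u⟫ = - ⟪Ax - Au, y - u⟫ := by
    simp only [inner_sub_left, inner_sub_right]; ring
  have h5 : r * ⟪Ax - Au, y - u⟫ ≤ ⟪u - y, y - x⟫ := by
    have : ⟪Ax - Au, y - u⟫ ≤ (1 / r) * ⟪u - y, y - x⟫ := by linarith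
    have := mul_le_mul_of_nonneg_left this hr.le
    rwa [← mul_assoc, mul_one_div_cancel hr.ne', one_mul] at this
  have e2 : ‖x - u‖ ^ 2 = ‖x - y‖ ^ 2 + ‖y - u‖ ^ 2 + 2 * ⟪u - y, y - x⟫ := by
    have : x - u = (x - y) + (y - u) := by abel
    rw [this, norm_add_sq_real]
    have : ⟪u - y, y - x⟫ = ⟪x - y, y - u⟫ := by
      rw [real_inner_comm, ← neg_sub x y, ← neg_sub y u, inner_neg_neg]
    rw [this]; ring
  have e3 : ⟪Ax - Au, y - u⟫ = ⟪Ax - Au, x - u⟫ - ⟪Ax - Au, x - y⟫ := by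
    rw [← inner_sub_right]; congr 1; abel
  have h6 : ⟪Ax - Au, x - y⟫ ≤ ‖Ax - Au‖ * ‖x - y‖ := real_inner_le_norm _ _
  set s := ‖Ax - Au‖
  set t := ‖x - y‖
  have h7 : r * (α * s ^ 2 - s * t) ≤ ⟪u - y, y - x⟫ := by
    refine le_trans (mul_le_mul_of_nonneg_left ?_ hr.le) h5
    linarith
  have h8 : t ^ 2 + 2 * (r * (α * s ^ 2 - s * t))
      = (1 - r / (2 * α)) * t ^ 2 + r / (2 * α) * (t - 2 * α * s) ^ 2 := by
    field_simp; ring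
  have h9 : 0 ≤ r / (2 * α) * (t - 2 * α * s) ^ 2 := by positivity
  have h10 : r / (2 * α) * t ^ 2 ≤ e / (2 * α) * t ^ 2 := by gcongr
  nlinarith

/-- convex combination identity -/
lemma aux_comb {H : Type*} [NormedAddCommGroup H] [InnerProductSpace ℝ H]
    (t : ℝ) (x y u : H) :
    ‖t • x + (1 - t) • y - u‖ ^ 2
      = t * ‖x - u‖ ^ 2 + (1 - t) * ‖y - u‖ ^ 2 - t * (1 - t) * ‖x - y‖ ^ 2 := by
  have e1 : t • x + (1 - t) • y - u = t • (x - u) + (1 - t) • (y - u) := by module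
  have e2 : x - y = (x - u) - (y - u) := by abel
  rw [e1, e2, norm_add_sq_real, norm_sub_sq_real (x - u), norm_smul, norm_smul, inner_smul_left,
    inner_smul_right, mul_pow, mul_pow, Real.norm_eq_abs, Real.norm_eq_abs, sq_abs, sq_abs]
  simp only [conj_trivial]
  ring

/-- the estimate for the Mann-type step -/
lemma aux_step {H : Type*} [NormedAddCommGroup H] [InnerProductSpace ℝ H]
    (x y s u : H) (a β κ k c t : ℝ) (ha0 : 0 < a) (ha1 : a < 1) (hκβ : κ ≤ β)
    (hκ0 : 0 ≤ κ) (hβ1 : β < 1)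
    (hk : 1 ≤ k) (hc : 0 ≤ c)
    (hs : ‖s - u‖ ^ 2 ≤ k * ‖y - u‖ ^ 2 + κ * ‖y - s‖ ^ 2)
    (hy : ‖y - u‖ ^ 2 ≤ ‖x - u‖ ^ 2 - c * t ^ 2) :
    ‖a • x + (1 - a) • (β • y + (1 - β) • s) - u‖ ^ 2
      ≤ ‖x - u‖ ^ 2 + (k - 1) * ‖x - u‖ ^ 2 - (1 - a) * (c * t ^ 2) := by
  rw [aux_comb a]
  have h1 : ‖β • y + (1 - β) • s - u‖ ^ 2 ≤ k * ‖y - u‖ ^ 2 := by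
    rw [aux_comb β]
    have := mul_le_mul_of_nonneg_left hs (by linarith : 0 ≤ 1 - β)
    have h2 : 0 ≤ (1 - β) * (β - κ) * ‖y - s‖ ^ 2 :=
      mul_nonneg (mul_nonneg (by linarith) (by linarith)) (by positivity)
    have h3 : 0 ≤ β * (k - 1) * ‖y - u‖ ^ 2 :=
      mul_nonneg (mul_nonneg (by linarith) (by linarith)) (by positivity)
    nlinarith
  have h2 : k * ‖y - u‖ ^ 2 ≤ ‖x - u‖ ^ 2 + (k - 1) * ‖x - u‖ ^ 2 - c * t ^ 2 := by
    have h3 := mul_le_mul_of_nonneg_left hy (by linarith : 0 ≤ k)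
    have h4 : 0 ≤ (k - 1) * (c * t ^ 2) := mul_nonneg (by linarith) (by positivity)
    nlinarith
  have h3 := mul_le_mul_of_nonneg_left (h1.trans h2) (by linarith : 0 ≤ 1 - a)
  have h4 : 0 ≤ a * (1 - a) * ‖x - (β • y + (1 - β) • s)‖ ^ 2 :=
    mul_nonneg (mul_nonneg ha0.le (by linarith)) (by positivity)
  have h5 : 0 ≤ a * ((k - 1) * ‖x - u‖ ^ 2) :=
    mul_nonneg ha0.le (mul_nonneg (by linarith) (by positivity))
  nlinarith

/-- Lipschitz bound -/
lemma aux_lip (u d w κ K : ℝ) (hu : 0 ≤ u) (hd : 0 ≤ d) (hw0 : 0 ≤ w) (hw : w ≤ d + u)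
    (hκ0 : 0 ≤ κ) (hκ1 : κ < 1) (h : u ^ 2 ≤ K * d ^ 2 + κ * w ^ 2) :
    u ^ 2 ≤ 2 / (1 - κ) * (K + κ + 2 * κ ^ 2 / (1 - κ)) * d ^ 2 := by
  have h1 : (0:ℝ) < 1 - κ := by linarith
  have h2 : w ^ 2 ≤ (d + u) ^ 2 := by gcongr
  have h3 := mul_le_mul_of_nonneg_left h2 hκ0
  have h4 : 2 * κ * d * u ≤ (1 - κ) / 2 * u ^ 2 + 2 * κ ^ 2 / (1 - κ) * d ^ 2 := by
    have : (1 - κ) / 2 * u ^ 2 + 2 * κ ^ 2 / (1 - κ) * d ^ 2 - 2 * κ * d * u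
      = (1 - κ) / 2 * (u - 2 * κ / (1 - κ) * d) ^ 2 := by field_simp; ring
    have : 0 ≤ (1 - κ) / 2 * (u - 2 * κ / (1 - κ) * d) ^ 2 := by positivity
    linarith
  have h5 : (1 - κ) / 2 * u ^ 2 ≤ (K + κ + 2 * κ ^ 2 / (1 - κ)) * d ^ 2 := by nlinarith
  have h6 := mul_le_mul_of_nonneg_left h5 (by positivity : 0 ≤ 2 / (1 - κ))
  calc u ^ 2 = 2 / (1 - κ) * ((1 - κ) / 2 * u ^ 2) := by field_simp
    _ ≤ _ := by rw [mul_assoc]; exact h6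

/-- Minty-type argument -/
lemma aux_minty {H : Type*} [NormedAddCommGroup H] [InnerProductSpace ℝ H]
    (C : Set H) (hCcv : Convex ℝ C) (f : H → H → ℝ)
    (hfA1 : ∀ x ∈ C, f x x = 0)
    (hfA2 : ∀ x ∈ C, ∀ y ∈ C, f x y + f y x ≤ 0)
    (hfA3 : ∀ x ∈ C, ∀ y ∈ C, ∀ z ∈ C,
      Filter.limsup (fun t : ℝ => f (t • z + (1 - t) • x) y) (nhdsWithin 0 (Set.Ioi 0))
        ≤ f x y)
    (hfA4conv : ∀ x ∈ C, ConvexOn ℝ C (f x))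
    (hfA4lsc : ∀ x ∈ C, LowerSemicontinuousOn (f x) C)
    (p B : H) (hp : p ∈ C) (h : ∀ w ∈ C, f w p ≤ ⟪B, w - p⟫) :
    ∀ w ∈ C, 0 ≤ f p w + ⟪B, w - p⟫ := by
  intro w hw
  have hev : ∀ᶠ t : ℝ in 𝓝[>] 0, t ∈ Set.Ioo (0:ℝ) 1 := Ioo_mem_nhdsGT one_pos
  have hmem : ∀ t ∈ Set.Ioo (0:ℝ) 1, t • w + (1 - t) • p ∈ C := fun t ht =>
    hCcv hw hp ht.1.le (by linarith [ht.2]) (by ring)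
  have hlow : ∀ᶠ t : ℝ in 𝓝[>] 0, -(1 - t) * ⟪B, w - p⟫ ≤ f (t • w + (1 - t) • p) w := by
    filter_upwards [hev] with t ht
    set v := t • w + (1 - t) • p with hv
    have hvC := hmem t ht
    have h1 : f v v ≤ t * f v w + (1 - t) * f v p :=
      (hfA4conv v hvC).2 hw hp ht.1.le (by linarith [ht.2]) (by ring)
    rw [hfA1 v hvC] at h1
    have h2 := h v hvC
    have h3 : v - p = t • (w - p) := by rw [hv]; module
    rw [h3, inner_smul_right] at h2
    have h4 := mul_le_mul_of_nonneg_left h2 (by linarith [ht.2] : 0 ≤ 1 - t)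
    have h5 : 0 ≤ t * (f v w + (1 - t) * ⟪B, w - p⟫) := by nlinarith
    have := nonneg_of_mul_nonneg_right h5 ht.1
    linarith
  have hcont : Tendsto (fun t : ℝ => t • w + (1 - t) • p) (𝓝[>] 0) (𝓝 p) := by
    have : Continuous (fun t : ℝ => t • w + (1 - t) • p) := by fun_prop
    have := this.tendsto 0
    simp only [zero_smul, sub_zero, one_smul, zero_add] at this
    exact this.mono_left nhdsWithin_le_nhds
  have hcontC : Tendsto (fun t : ℝ => t • w + (1 - t) • p) (𝓝[>] 0) (𝓝[C] p) :=
    tendsto_nhdsWithin_iff.2 ⟨hcont, hev.mono hmem⟩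
  have hup : ∀ᶠ t : ℝ in 𝓝[>] 0, f (t • w + (1 - t) • p) w ≤ -(f w p - 1) := by
    have h1 := hcontC.eventually (hfA4lsc w hw p hp (f w p - 1) (by linarith))
    filter_upwards [h1, hev] with t ht1 ht2
    have := hfA2 _ (hmem t ht2) w hw
    linarith
  have hlim : Tendsto (fun t : ℝ => -(1 - t) * ⟪B, w - p⟫) (𝓝[>] 0) (𝓝 (-⟪B, w - p⟫)) := by
    have : Continuous (fun t : ℝ => -(1 - t) * ⟪B, w - p⟫) := by fun_prop
    have := this.tendsto 0
    simp only [sub_zero, neg_mul, one_mul] at this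
    simp only [neg_mul]
    exact this.mono_left nhdsWithin_le_nhds
  have h1 : -⟪B, w - p⟫ ≤ limsup (fun t : ℝ => f (t • w + (1 - t) • p) w) (𝓝[>] 0) := by
    rw [← hlim.limsup_eq]
    exact limsup_le_limsup hlow hlim.isCoboundedUnder_le ⟨_, eventually_map.2 hup⟩
  linarith [hfA3 p hp w hw w hw]

lemma aux_sq {H : Type*} [NormedAddCommGroup H] (g : ℕ → H) 
    (h : Tendsto (fun n => ‖g n‖ ^ 2) atTop (𝓝 0)) : Tendsto g atTop (𝓝 0) := by
  rw [tendsto_zero_iff_norm_tendsto_zero]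
  have := h.sqrt
  simpa using this

/-- **Theorem 3.1.** Strong convergence of the parallel hybrid Algorithm 1
for generalized equilibrium problems and asymptotically strictly pseudocontractive
mappings: the sequences `x_n`, `y_n^i`, `z_n^j` all converge strongly to `P_F x_0`. -/
theorem algorithm1_strong_convergence
    {H : Type*} [NormedAddCommGroup H] [InnerProductSpace ℝ H] [CompleteSpace H]
    (C : Set H) (hCne : C.Nonempty) (hCcl : IsClosed C) (hCcv : Convex ℝ C)
    (N M : ℕ) (hN : 0 < N) (hM : 0 < M)
    -- the bifunctions fᵢ satisfy (A1)-(A4)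
    (f : Fin N → H → H → ℝ)
    (hfA1 : ∀ i, ∀ x ∈ C, f i x x = 0)
    (hfA2 : ∀ i, ∀ x ∈ C, ∀ y ∈ C, f i x y + f i y x ≤ 0)
    (hfA3 : ∀ i, ∀ x ∈ C, ∀ y ∈ C, ∀ z ∈ C,
      Filter.limsup (fun t : ℝ => f i (t • z + (1 - t) • x) y) (nhdsWithin 0 (Set.Ioi 0))
        ≤ f i x y)
    (hfA4conv : ∀ i, ∀ x ∈ C, ConvexOn ℝ C (f i x))
    (hfA4lsc : ∀ i, ∀ x ∈ C, LowerSemicontinuousOn (f i x) C)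
    -- the operators Aᵢ are α-inverse strongly monotone on C
    (A : Fin N → H → H) (α : ℝ) (hα : 0 < α)
    (hism : ∀ i, ∀ x ∈ C, ∀ y ∈ C, α * ‖A i x - A i y‖ ^ 2 ≤ ⟪A i x - A i y, x - y⟫)
    -- the mappings Sⱼ : C → C are asymptotically κ-strictly pseudocontractive with
    -- the same sequence {kₙ} ⊆ [1,∞), kₙ → 1
    (S : Fin M → H → H) (hS : ∀ j, Set.MapsTo (S j) C C)
    (κ : ℝ) (hκ0 : 0 ≤ κ) (hκ1 : κ < 1)
    (k : ℕ → ℝ) (hk1 : ∀ n, 1 ≤ k n)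
    (hklim : Filter.Tendsto k Filter.atTop (nhds 1))
    (hasym : ∀ j, ∀ n, 1 ≤ n → ∀ x ∈ C, ∀ y ∈ C,
      ‖(S j)^[n] x - (S j)^[n] y‖ ^ 2
        ≤ k n * ‖x - y‖ ^ 2 + κ * ‖(x - (S j)^[n] x) - (y - (S j)^[n] y)‖ ^ 2)
    -- the solution set F is nonempty and bounded by ω
    (F : Set H)
    (hF : F = {v ∈ C | ∀ i, ∀ y ∈ C, 0 ≤ f i v y + ⟪A i v, y - v⟫} ∩
      {v | ∀ j, S j v = v})
    (hFne : F.Nonempty) (ω : ℝ) (hω : 0 < ω) (hFb : ∀ v ∈ F, ‖v‖ ≤ ω)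
    -- control parameters
    (a : ℕ → ℝ) (ha0 : ∀ n, 0 < a n) (ha1 : ∀ n, a n < 1)
    (halimsup : Filter.limsup a Filter.atTop < 1)
    (β : ℕ → ℝ) (b : ℝ) (hbκ : κ < b) (hb1 : b < 1) (hβ : ∀ n, κ ≤ β n ∧ β n ≤ b)
    (r : ℕ → ℝ) (d e : ℝ) (hd : 0 < d) (he : e < 2 * α) (hr : ∀ n, d ≤ r n ∧ r n ≤ e)
    -- the iterates of Algorithm 1
    (x : ℕ → H) (y : ℕ → Fin N → H) (z : ℕ → Fin M → H)
    (iN : ℕ → Fin N) (jM : ℕ → Fin M) (ybar zbar : ℕ → H) (Cset : ℕ → Set H)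
    (hx0 : x 0 ∈ C) (hC0 : Cset 0 = C)
    -- (i) yₙⁱ solves the regularized generalized equilibrium problem
    (hy : ∀ n i, y n i ∈ C ∧ ∀ w ∈ C,
      0 ≤ f i (y n i) w + ⟪A i (x n), w - y n i⟫ +
        (1 / r n) * ⟪w - y n i, y n i - x n⟫)
    -- (ii) iₙ maximizes ‖yₙⁱ - xₙ‖ and ȳₙ = yₙ^{iₙ}
    (hiN : ∀ n i, ‖y n i - x n‖ ≤ ‖y n (iN n) - x n‖)
    (hybar : ∀ n, ybar n = y n (iN n))
    -- (iii) zₙʲ = αₙ xₙ + (1-αₙ)(βₙ ȳₙ + (1-βₙ) Sⱼⁿ ȳₙ)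
    (hz : ∀ n j, z n j = a n • x n +
      (1 - a n) • (β n • ybar n + (1 - β n) • (S j)^[n] (ybar n)))
    -- (iv) jₙ maximizes ‖zₙʲ - xₙ‖ and z̄ₙ = zₙ^{jₙ}
    (hjM : ∀ n j, ‖z n j - x n‖ ≤ ‖z n (jM n) - x n‖)
    (hzbar : ∀ n, zbar n = z n (jM n))
    -- (v) Cₙ₊₁ = {v ∈ Cₙ : ‖z̄ₙ - v‖² ≤ ‖xₙ - v‖² + εₙ}, εₙ = (kₙ - 1)(‖xₙ‖ + ω)²
    (hCset : ∀ n, Cset (n + 1) =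
      {v ∈ Cset n | ‖zbar n - v‖ ^ 2 ≤ ‖x n - v‖ ^ 2 + (k n - 1) * (‖x n‖ + ω) ^ 2})
    -- (vi) xₙ₊₁ = P_{Cₙ₊₁} x₀
    (hxproj : ∀ n, IsProjOn (Cset (n + 1)) (x 0) (x (n + 1))) :
    ∃ p, IsProjOn F (x 0) p ∧
      Filter.Tendsto x Filter.atTop (nhds p) ∧
      (∀ i, Filter.Tendsto (fun n => y n i) Filter.atTop (nhds p)) ∧
      (∀ j, Filter.Tendsto (fun n => z n j) Filter.atTop (nhds p)) := by
  have hFC : ∀ u ∈ F, u ∈ C := fun u hu => by rw [hF] at hu; exact hu.1.1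
  have hFE : ∀ u ∈ F, ∀ i, ∀ y ∈ C, 0 ≤ f i u y + ⟪A i u, y - u⟫ := fun u hu => by
    rw [hF] at hu; exact hu.1.2
  have hFS : ∀ u ∈ F, ∀ j, S j u = u := fun u hu => by rw [hF] at hu; exact hu.2
  have hanti : ∀ n m, n ≤ m → Cset m ⊆ Cset n := by
    intro n m hnm
    induction m, hnm using Nat.le_induction with
    | base => exact subset_rfl
    | succ m _ ih => rw [hCset m]; exact fun v hv => ih hv.1
  have hxC' : ∀ n, x n ∈ Cset n := by
    intro n
    cases n with
    | zero => rw [hC0]; exact hx0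
    | succ n => exact (hxproj n).1
  have hxC : ∀ n, x n ∈ C := fun n => hC0 ▸ hanti 0 n (Nat.zero_le n) (hxC' n)
  have hxmin : ∀ n, ∀ v ∈ Cset n, ‖x n - x 0‖ ≤ ‖v - x 0‖ := by
    intro n v hv
    cases n with
    | zero => simp
    | succ n => exact (hxproj n).2 v hv
  have hybC : ∀ n, ybar n ∈ C := fun n => by rw [hybar]; exact (hy n _).1
  have he0 : e / (2 * α) < 1 := by rw [div_lt_one (by linarith)]; exact he
  set c := 1 - e / (2 * α) with hc
  have hc0 : 0 < c := by linarith
  have hyest : ∀ u ∈ F, ∀ n i, ‖y n i - u‖ ^ 2 ≤ ‖x n - u‖ ^ 2 - c * ‖x n - y n i‖ ^ 2 := by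
    intro u hu n i
    exact aux_resolvent (x n) (y n i) u (A i (x n)) (A i u) α (r n) e _ _ hα
      (hd.trans_le (hr n).1) (hr n).2 ((hy n i).2 u (hFC u hu)) (hFE u hu i _ (hy n i).1)
      (hfA2 i _ (hy n i).1 _ (hFC u hu)) (hism i _ (hxC n) _ (hFC u hu))
  have hit : ∀ u ∈ F, ∀ j n, (S j)^[n] u = u := fun u hu j n =>
    Function.iterate_fixed (hFS u hu j) n
  have hSest : ∀ u ∈ F, ∀ n j, ∀ w ∈ C, ‖(S j)^[n] w - u‖ ^ 2
      ≤ k n * ‖w - u‖ ^ 2 + κ * ‖w - (S j)^[n] w‖ ^ 2 := by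
    intro u hu n j w hw
    rcases Nat.eq_zero_or_pos n with rfl | hn
    · simp only [Function.iterate_zero, id, sub_self, norm_zero]
      nlinarith [hk1 0, sq_nonneg ‖w - u‖]
    · have := hasym j n hn w hw u (hFC u hu)
      simpa [hit u hu] using this
  have hzest : ∀ u ∈ F, ∀ n j, ‖z n j - u‖ ^ 2
      ≤ ‖x n - u‖ ^ 2 + (k n - 1) * ‖x n - u‖ ^ 2 - (1 - a n) * (c * ‖x n - ybar n‖ ^ 2) := by
    intro u hu n j
    rw [hz]
    refine aux_step (x n) (ybar n) _ u (a n) (β n) κ (k n) c _ (ha0 n) (ha1 n) (hβ n).1 hκ0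
      (by linarith [(hβ n).2]) (hk1 n) hc0.le (hSest u hu n j _ (hybC n)) ?_
    rw [hybar]; exact hyest u hu n _
  have hFCn : ∀ n, ∀ u ∈ F, u ∈ Cset n := by
    intro n u hu
    induction n with
    | zero => rw [hC0]; exact hFC u hu
    | succ n ih =>
      rw [hCset]
      refine ⟨ih, ?_⟩
      have h1 := hzest u hu n (jM n)
      rw [← hzbar] at h1
      have h2 : ‖x n - u‖ ^ 2 ≤ (‖x n‖ + ω) ^ 2 := by
        gcongr
        exact (norm_sub_le _ _).trans (by linarith [hFb u hu])
      have h3 := mul_le_mul_of_nonneg_left h2 (by linarith [hk1 n] : 0 ≤ k n - 1)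
      have h4 : 0 ≤ (1 - a n) * (c * ‖x n - ybar n‖ ^ 2) :=
        mul_nonneg (by linarith [ha1 n]) (by positivity)
      linarith
  have hmid : ∀ n, ∀ u ∈ Cset n, ∀ v ∈ Cset n,
      (1 / 2 : ℝ) • u + (1 - 1 / 2 : ℝ) • v ∈ Cset n := by
    intro n
    induction n with
    | zero =>
      intro u hu v hv
      rw [hC0] at *
      exact hCcv hu hv (by norm_num) (by norm_num) (by norm_num)
    | succ n ih =>
      intro u hu v hv
      rw [hCset] at *
      refine ⟨ih u hu.1 v hv.1, ?_⟩
      have h1 := hu.2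
      have h2 := hv.2
      rw [norm_sub_rev (zbar n), norm_sub_rev (x n)] at *
      rw [aux_comb, aux_comb]
      linarith
  -- Cauchy
  have hkey : ∀ n m, n ≤ m →
      ‖x m - x n‖ ^ 2 ≤ 2 * (‖x m - x 0‖ ^ 2 - ‖x n - x 0‖ ^ 2) := by
    intro n m hnm
    have h1 := hxmin n _ (hmid n _ (hanti n m hnm (hxC' m)) _ (hxC' n))
    have h2 : ‖x n - x 0‖ ^ 2 ≤ ‖(1 / 2 : ℝ) • x m + (1 - 1 / 2 : ℝ) • x n - x 0‖ ^ 2 := by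
      gcongr
    rw [aux_comb] at h2
    linarith
  obtain ⟨u0, hu0⟩ := hFne
  have hmono : Monotone (fun n => ‖x n - x 0‖ ^ 2) := by
    intro n m hnm
    have := hkey n m hnm
    have h2 := sq_nonneg ‖x m - x n‖
    simp only
    linarith
  have hbdd : BddAbove (Set.range (fun n => ‖x n - x 0‖ ^ 2)) := by
    refine ⟨‖u0 - x 0‖ ^ 2, ?_⟩
    rintro _ ⟨n, rfl⟩
    have := hxmin n _ (hFCn n u0 hu0)
    simp only
    gcongr
  obtain ⟨L, hL⟩ : ∃ L, Tendsto (fun n => ‖x n - x 0‖ ^ 2) atTop (𝓝 L) :=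
    ⟨_, tendsto_atTop_ciSup hmono hbdd⟩
  have hLge : ∀ n, ‖x n - x 0‖ ^ 2 ≤ L := hmono.ge_of_tendsto hL
  have hcau : CauchySeq x := by
    refine cauchySeq_of_le_tendsto_0 (fun n => Real.sqrt (2 * (L - ‖x n - x 0‖ ^ 2))) ?_ ?_
    · have hone : ∀ n m N, N ≤ n → n ≤ m →
          dist (x m) (x n) ≤ Real.sqrt (2 * (L - ‖x N - x 0‖ ^ 2)) := by
        intro n m N hNn hnm
        rw [dist_eq_norm]
        apply Real.le_sqrt_of_sq_le
        have h1 := hkey n m hnm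
        have h2 := hLge m
        have h3 := hmono hNn
        simp only at h3
        linarith
      intro n m N hn hm
      rcases le_total n m with h | h
      · rw [dist_comm]; exact hone n m N hn h
      · exact hone m n N hm h
    · have : Tendsto (fun n => 2 * (L - ‖x n - x 0‖ ^ 2)) atTop (𝓝 (2 * (L - L))) :=
        (tendsto_const_nhds.sub hL).const_mul 2
      simpa using this.sqrt
  obtain ⟨p, hp⟩ := cauchySeq_tendsto_of_complete hcau
  have hpC : p ∈ C := hCcl.mem_of_tendsto hp (Eventually.of_forall hxC)
  have hk0 : Tendsto (fun n => k n - 1) atTop (𝓝 0) := by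
    simpa using hklim.sub_const 1
  have hp1 : Tendsto (fun n => x (n + 1)) atTop (𝓝 p) := hp.comp (tendsto_add_atTop_nat 1)
  -- zbar
  have hzb : Tendsto (fun n => zbar n - x (n + 1)) atTop (𝓝 0) := by
    apply aux_sq
    have hb : Tendsto (fun n => ‖x n - x (n + 1)‖ ^ 2 + (k n - 1) * (‖x n‖ + ω) ^ 2) atTop
        (𝓝 (‖p - p‖ ^ 2 + 0 * (‖p‖ + ω) ^ 2)) :=
      ((hp.sub hp1).norm.pow 2).add (hk0.mul ((hp.norm.add_const ω).pow 2))
    have hb' : Tendsto (fun n => ‖x n - x (n + 1)‖ ^ 2 + (k n - 1) * (‖x n‖ + ω) ^ 2) atTop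
        (𝓝 0) := by simpa using hb
    refine squeeze_zero (fun n => by positivity) (fun n => ?_) hb'
    have := (hxproj n).1
    rw [hCset] at this
    exact this.2
  have hzbp : Tendsto zbar atTop (𝓝 p) := by
    have := hzb.add hp1
    simpa using this
  have hzx : ∀ j, Tendsto (fun n => z n j - x n) atTop (𝓝 0) := by
    intro j
    have h1 : Tendsto (fun n => ‖zbar n - x n‖) atTop (𝓝 0) := by
      simpa using (hzbp.sub hp).norm
    refine squeeze_zero_norm (fun n => ?_) h1
    rw [hzbar]; exact hjM n j
  have hzp : ∀ j, Tendsto (fun n => z n j) atTop (𝓝 p) := by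
    intro j
    simpa using (hzx j).add hp
  -- the coefficients a n
  obtain ⟨δ, hδ0, hδ⟩ : ∃ δ : ℝ, 0 < δ ∧ ∀ᶠ n in atTop, δ ≤ 1 - a n := by
    obtain ⟨q, hq1, hq2⟩ := exists_between halimsup
    refine ⟨1 - q, by linarith, ?_⟩
    have := eventually_lt_of_limsup_lt hq1
      ⟨1, eventually_map.2 (Eventually.of_forall fun n => (ha1 n).le)⟩
    filter_upwards [this] with n hn
    linarith
  -- ybar
  have hyb : Tendsto (fun n => x n - ybar n) atTop (𝓝 0) := by
    apply aux_sq
    have hb : Tendsto (fun n => (‖x n - u0‖ ^ 2 + (k n - 1) * ‖x n - u0‖ ^ 2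
        - ‖zbar n - u0‖ ^ 2) / (δ * c)) atTop
        (𝓝 ((‖p - u0‖ ^ 2 + 0 * ‖p - u0‖ ^ 2 - ‖p - u0‖ ^ 2) / (δ * c))) := by
      have h1 := (hp.sub_const u0).norm.pow 2
      exact ((h1.add (hk0.mul h1)).sub ((hzbp.sub_const u0).norm.pow 2)).div_const _
    have hb' : Tendsto (fun n => (‖x n - u0‖ ^ 2 + (k n - 1) * ‖x n - u0‖ ^ 2
        - ‖zbar n - u0‖ ^ 2) / (δ * c)) atTop (𝓝 0) := by simpa using hb
    refine squeeze_zero' (Eventually.of_forall fun n => by positivity) ?_ hb'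
    filter_upwards [hδ] with n hn
    rw [le_div_iff₀ (by positivity)]
    have h1 := hzest u0 hu0 n (jM n)
    rw [← hzbar] at h1
    have h2 := mul_le_mul_of_nonneg_right hn
      (by positivity : 0 ≤ c * ‖x n - ybar n‖ ^ 2)
    nlinarith
  have hybp : Tendsto ybar atTop (𝓝 p) := by
    simpa using hp.sub hyb
  have hyx : ∀ i, Tendsto (fun n => y n i - x n) atTop (𝓝 0) := by
    intro i
    have h1 : Tendsto (fun n => ‖x n - ybar n‖) atTop (𝓝 0) := by
      simpa using hyb.norm
    refine squeeze_zero_norm (fun n => ?_) h1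
    rw [hybar, norm_sub_rev (x n)]; exact hiN n i
  have hyp : ∀ i, Tendsto (fun n => y n i) atTop (𝓝 p) := by
    intro i
    simpa using (hyx i).add hp
  -- p is a fixed point
  have hlip : ∀ j n, 1 ≤ n → ∀ v ∈ C, ∀ w ∈ C, ‖(S j)^[n] v - (S j)^[n] w‖ ^ 2
      ≤ 2 / (1 - κ) * (k n + κ + 2 * κ ^ 2 / (1 - κ)) * ‖v - w‖ ^ 2 := by
    intro j n hn v hv w hw
    refine aux_lip _ _ _ κ (k n) (norm_nonneg _) (norm_nonneg _) (norm_nonneg _) ?_ hκ0 hκ1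
      (hasym j n hn v hv w hw)
    have : (v - (S j)^[n] v) - (w - (S j)^[n] w)
      = (v - w) - ((S j)^[n] v - (S j)^[n] w) := by abel
    rw [this]
    exact norm_sub_le _ _
  have hfix : ∀ j, S j p = p := by
    intro j
    have h1 : Tendsto (fun n => (S j)^[n] (ybar n) - ybar n) atTop (𝓝 0) := by
      have hb : Tendsto (fun n => (‖z n j - x n‖ / δ + ‖x n - ybar n‖) / (1 - b)) atTop
          (𝓝 0) := by
        simpa using ((((hzx j).norm).div_const δ).add hyb.norm).div_const (1 - b)
      refine squeeze_zero_norm' ?_ hb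
      filter_upwards [hδ] with n hn
      have hb0 : 0 < 1 - b := by linarith
      have hβn := (hβ n).2
      have e1 : z n j - x n = (1 - a n) •
          ((1 - β n) • ((S j)^[n] (ybar n) - ybar n) - (x n - ybar n)) := by
        rw [hz]; module
      set g := (S j)^[n] (ybar n) - ybar n
      have h2 : ‖(1 - β n) • g - (x n - ybar n)‖ ≤ ‖z n j - x n‖ / δ := by
        rw [le_div_iff₀ hδ0, e1, norm_smul, Real.norm_of_nonneg (by linarith), mul_comm]
        gcongr
      have h3 : ‖(1 - β n) • g‖ ≤ ‖(1 - β n) • g - (x n - ybar n)‖ + ‖x n - ybar n‖ := by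
        simpa using norm_add_le ((1 - β n) • g - (x n - ybar n)) (x n - ybar n)
      rw [norm_smul, Real.norm_of_nonneg (by linarith)] at h3
      rw [le_div_iff₀ hb0]
      have h4 : ‖g‖ * (1 - b) ≤ (1 - β n) * ‖g‖ := by
        rw [mul_comm]; gcongr
      linarith
    have h2 : Tendsto (fun n => (S j)^[n] (ybar n) - (S j)^[n] p) atTop (𝓝 0) := by
      apply aux_sq
      have hb : Tendsto (fun n => 2 / (1 - κ) * (k n + κ + 2 * κ ^ 2 / (1 - κ))
          * ‖ybar n - p‖ ^ 2) atTop
          (𝓝 (2 / (1 - κ) * (1 + κ + 2 * κ ^ 2 / (1 - κ)) * ‖p - p‖ ^ 2)) :=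
        (((hklim.add_const κ).add_const _).const_mul _).mul ((hybp.sub_const p).norm.pow 2)
      have hb' : Tendsto (fun n => 2 / (1 - κ) * (k n + κ + 2 * κ ^ 2 / (1 - κ))
          * ‖ybar n - p‖ ^ 2) atTop (𝓝 0) := by simpa using hb
      refine squeeze_zero' (Eventually.of_forall fun n => by positivity) ?_ hb'
      filter_upwards [eventually_ge_atTop 1] with n hn
      exact hlip j n hn _ (hybC n) _ hpC
    have h3 : Tendsto (fun n => (S j)^[n] p) atTop (𝓝 p) := by
      have := (h1.add hybp).sub h2
      simpa using this
    have h4 : Tendsto (fun n => (S j)^[n + 1] p) atTop (𝓝 p) :=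
      h3.comp (tendsto_add_atTop_nat 1)
    have h5 : Tendsto (fun n => (S j)^[n + 1] p - S j p) atTop (𝓝 0) := by
      apply aux_sq
      have hb : Tendsto (fun n => 2 / (1 - κ) * (k 1 + κ + 2 * κ ^ 2 / (1 - κ))
          * ‖(S j)^[n] p - p‖ ^ 2) atTop
          (𝓝 (2 / (1 - κ) * (k 1 + κ + 2 * κ ^ 2 / (1 - κ)) * ‖p - p‖ ^ 2)) :=
        ((h3.sub_const p).norm.pow 2).const_mul _
      have hb' : Tendsto (fun n => 2 / (1 - κ) * (k 1 + κ + 2 * κ ^ 2 / (1 - κ))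
          * ‖(S j)^[n] p - p‖ ^ 2) atTop (𝓝 0) := by simpa using hb
      refine squeeze_zero (fun n => by positivity) (fun n => ?_) hb'
      have := hlip j 1 le_rfl _ ((hS j).iterate n hpC) _ hpC
      rw [Function.iterate_succ_apply']
      simpa only [Function.iterate_one] using this
    have h6 := h4.sub h5
    simp only [sub_sub_cancel, sub_zero] at h6
    exact tendsto_nhds_unique tendsto_const_nhds h6
  -- p solves the equilibrium problems
  have hA : ∀ i, Tendsto (fun n => A i (x n)) atTop (𝓝 (A i p)) := by
    intro i
    rw [tendsto_iff_norm_sub_tendsto_zero]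
    have hb : Tendsto (fun n => ‖x n - p‖ / α) atTop (𝓝 0) := by
      simpa using (hp.sub_const p).norm.div_const α
    refine squeeze_zero (fun n => norm_nonneg _) (fun n => ?_) hb
    rw [le_div_iff₀ hα]
    have h1 := hism i _ (hxC n) _ hpC
    have h2 := real_inner_le_norm (A i (x n) - A i p) (x n - p)
    rcases (norm_nonneg (A i (x n) - A i p)).eq_or_lt with h0 | h0
    · rw [← h0]; simp
    · have h3 : ‖A i (x n) - A i p‖ * (‖A i (x n) - A i p‖ * α)
          ≤ ‖A i (x n) - A i p‖ * ‖x n - p‖ := by nlinarith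
      exact le_of_mul_le_mul_left h3 h0
  have hgep : ∀ i, ∀ w ∈ C, 0 ≤ f i p w + ⟪A i p, w - p⟫ := by
    intro i
    refine aux_minty C hCcv (f i) (hfA1 i) (hfA2 i) (hfA3 i) (hfA4conv i) (hfA4lsc i) p (A i p)
      hpC ?_
    intro w hw
    have hyC : Tendsto (fun n => y n i) atTop (𝓝[C] p) :=
      tendsto_nhdsWithin_iff.2 ⟨hyp i, Eventually.of_forall fun n => (hy n i).1⟩
    have hg0 : Tendsto (fun n => (1 / r n) * ⟪w - y n i, y n i - x n⟫) atTop (𝓝 0) := by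
      have hb : Tendsto (fun n => (1 / d) * |⟪w - y n i, y n i - x n⟫|) atTop (𝓝 0) := by
        have : Tendsto (fun n => ⟪w - y n i, y n i - x n⟫) atTop (𝓝 ⟪w - p, (0 : H)⟫) :=
          (tendsto_const_nhds.sub (hyp i)).inner (hyx i)
        simpa using this.abs.const_mul (1 / d)
      refine squeeze_zero_norm (fun n => ?_) hb
      have hrn := (hr n).1
      rw [norm_mul, Real.norm_eq_abs, Real.norm_eq_abs,
        abs_of_pos (one_div_pos.2 (hd.trans_le hrn))]
      gcongr
    have hg : Tendsto (fun n => ⟪A i (x n), w - y n i⟫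
        + (1 / r n) * ⟪w - y n i, y n i - x n⟫) atTop (𝓝 (⟪A i p, w - p⟫ + 0)) :=
      ((hA i).inner (tendsto_const_nhds.sub (hyp i))).add hg0
    rw [add_zero] at hg
    refine le_of_forall_lt_imp_le_of_dense fun q hq => ?_
    refine ge_of_tendsto hg ?_
    filter_upwards [hyC.eventually (hfA4lsc i w hw p hpC q hq)] with n hn
    have h1 := (hy n i).2 w hw
    have h2 := hfA2 i _ (hy n i).1 w hw
    linarith
  refine ⟨p, ⟨?_, ?_⟩, hp, hyp, hzp⟩
  · rw [hF]
    exact ⟨⟨hpC, hgep⟩, hfix⟩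
  · intro v hv
    exact le_of_tendsto (hp.sub_const (x 0)).norm
      (Eventually.of_forall fun n => hxmin n v (hFCn n v hv))
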